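/- arXiv:2301.07222 — 2 statements merged into one kernel-verified Lean document; each statement's English description precedes it below -/
import Mathlib

section
/- Every lower Christoffel word is strictly less in lexicographic order than another lower Christoffel word if and only if its slope is strictly smaller; i.e., for lower Christoffel words u, v over {a < b}, u <_lex v iff |u|_b/|u|_a < |v|_b/|v|_a (as elements of ℚ ∪ {∞}). -/
variable {α : Type*}

/-- The list of all cyclic rotations of a word. -/
def rotations (w : List α) : List (List α) :=
  (List.range w.length).map (fun i => w.rotate i)

/-- The Burrows–Wheeler transform: last letters of the lexicographically
sorted list of rotations. -/
def BWT [LinearOrder α] (w : List α) : List α :=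
  (List.insertionSort (· ≤ ·) (rotations w)).filterMap List.getLast?

/-- A word is primitive if it is nonempty and not a proper power. -/
def IsPrimitiveWord (w : List α) : Prop :=
  w ≠ [] ∧ ∀ (u : List α) (k : ℕ), w = (List.replicate k u).flatten → k = 1

/-- A primitive word is perfectly clustering if its Burrows–Wheeler
transform is weakly decreasing. -/
def PerfectlyClustering [LinearOrder α] (w : List α) : Prop :=
  IsPrimitiveWord w ∧ List.Chain' (· ≥ ·) (BWT w)

/-- Slope of a word over `{a < b} = {false < true}`: number of `b`'s over
number of `a`'s, in `ℚ ∪ {∞}`. -/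
def wordSlope (w : List Bool) : WithTop ℚ :=
  if w.count false = 0 then ⊤
  else (((w.count true : ℚ) / (w.count false : ℚ) : ℚ) : WithTop ℚ)

/-- A Lyndon word: the lexicographically smallest element of its conjugacy class. -/
def IsLyndonWord [LinearOrder β] (w : List β) : Prop :=
  w ≠ [] ∧ ∀ k, w ≤ w.rotate k

/-- A lower Christoffel word: a perfectly clustering word that is Lyndon. -/
def LowerChristoffel (w : List Bool) : Prop :=
  PerfectlyClustering w ∧ IsLyndonWord w

theorem aux_append_lt (x : Bool) : ∀ (s t : List Bool), s.length = t.length →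
    (s ++ [x] < t ++ [x] ↔ s < t)
  | [], [], _ => by simp
  | [], _ :: _, h => by simp at h
  | _ :: _, [], h => by simp at h
  | a :: s, b :: t, h => by
    have ih := aux_append_lt x s t (by simpa using h)
    simp only [List.cons_append, List.cons_lt_cons_iff, ih]

theorem aux_rot (w : List Bool) (k : ℕ) (hk : k < w.length) :
    ∃ s : List Bool, w.rotate k = w[k] :: s ∧ w.rotate (k+1) = s ++ [w[k]] := by
  refine ⟨w.drop (k+1) ++ w.take k, ?_, ?_⟩
  · rw [List.rotate_eq_drop_append_take hk.le, List.drop_eq_getElem_cons hk]; rfl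
  · rw [List.rotate_eq_drop_append_take (by omega), List.append_assoc,
      List.take_append_getElem]

theorem aux_cluster (w : List Bool) (h : List.Chain' (· ≥ ·) (BWT w)) (j k : ℕ)
    (hj : j < w.length) (hk : k < w.length)
    (hlt : w.rotate (j+1) < w.rotate (k+1)) : w[k] ≤ w[j] := by
  have hp : List.Pairwise (· ≥ ·) (BWT w) := List.isChain_iff_pairwise.1 h
  unfold BWT at hp
  rw [List.pairwise_filterMap] at hp
  have hs := List.pairwise_insertionSort (· ≤ · : List Bool → List Bool → Prop) (rotations w)
  have hmem : ∀ i, i < w.length →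
      w.rotate (i+1) ∈ List.insertionSort (· ≤ ·) (rotations w) := by
    intro i hi
    rw [List.mem_insertionSort, rotations, List.mem_map]
    exact ⟨(i+1) % w.length, List.mem_range.2 (Nat.mod_lt _ (by omega)), List.rotate_mod _ _⟩
  obtain ⟨a, ha, ea⟩ := List.getElem_of_mem (hmem j hj)
  obtain ⟨b, hb, eb⟩ := List.getElem_of_mem (hmem k hk)
  rw [List.pairwise_iff_getElem] at hp hs
  have hab : a < b := by
    by_contra hc
    rcases Nat.lt_or_ge b a with h1 | h1
    · have := hs b a hb ha h1
      rw [ea, eb] at this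
      exact absurd hlt (not_lt.2 this)
    · have : a = b := by omega
      subst this
      rw [← ea, ← eb] at hlt
      exact lt_irrefl _ hlt
  have := hp a b ha hb hab
  rw [ea, eb] at this
  obtain ⟨s, -, h1⟩ := aux_rot w j hj
  obtain ⟨t, -, h2⟩ := aux_rot w k hk
  exact this w[j] (by simp [h1]) w[k] (by simp [h2])

/-- rank of the `k`-th rotation -/
def auxRank (w : List Bool) (k : ℕ) : ℕ :=
  ∑ j ∈ Finset.range w.length, if w.rotate j < w.rotate k then 1 else 0

theorem auxRank_shift (w : List Bool) (k : ℕ) :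
    auxRank w k = ∑ j ∈ Finset.range w.length, if w.rotate (j+1) < w.rotate k then 1 else 0 := by
  have h1 := Finset.sum_range_succ (fun j => if w.rotate j < w.rotate k then 1 else 0) w.length
  have h2 := Finset.sum_range_succ' (fun j => if w.rotate j < w.rotate k then 1 else 0) w.length
  simp only [List.rotate_length, List.rotate_zero] at h1 h2
  unfold auxRank
  omega

theorem aux_count (w : List Bool) (x : Bool) :
    w.count x = ∑ j ∈ Finset.range w.length, if w[j]? = some x then 1 else 0 := by
  induction w with
  | nil => simp
  | cons a w ih =>
    rw [List.length_cons, Finset.sum_range_succ', List.count_cons, ih]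
    simp

theorem auxRank_lt (w : List Bool) (k : ℕ) (hw : w ≠ []) : auxRank w k < w.length := by
  have hpos : 0 < w.length := List.length_pos_iff.2 hw
  have : auxRank w k < ∑ j ∈ Finset.range w.length, 1 := by
    apply Finset.sum_lt_sum
    · intro i _; split_ifs <;> simp
    · refine ⟨k % w.length, Finset.mem_range.2 (Nat.mod_lt _ hpos), ?_⟩
      simp [List.rotate_mod]
  simpa using this

theorem auxRank_false (w : List Bool) (h : List.Chain' (· ≥ ·) (BWT w)) (k : ℕ)
    (hk : k < w.length) (hx : w[k] = false) :
    auxRank w (k+1) = auxRank w k + w.count true := by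
  rw [auxRank_shift, auxRank, aux_count w true, ← Finset.sum_add_distrib]
  apply Finset.sum_congr rfl
  intro j hj
  have hj := Finset.mem_range.1 hj
  have hc := aux_cluster w h k j hk hj
  obtain ⟨s, h1, h2⟩ := aux_rot w j hj
  obtain ⟨t, h3, h4⟩ := aux_rot w k hk
  have hl : s.length = t.length := by
    have e1 := congrArg List.length h1
    have e2 := congrArg List.length h3
    simp at e1 e2; omega
  rw [List.getElem?_eq_getElem hj]
  cases hb : w[j]
  · rw [hb] at h1 h2
    rw [hx] at h3 h4
    rw [h1, h2, h3, h4]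
    simp [aux_append_lt false s t hl]
  · rw [hb, hx] at hc
    have h5 : w.rotate (j+1) < w.rotate (k+1) := by
      rcases lt_trichotomy (w.rotate (j+1)) (w.rotate (k+1)) with h | h | h
      · exact h
      · rw [h2, h4, hb, hx] at h
        have := congrArg List.getLast? h
        simp at this
      · exact absurd (hc h) (by decide)
    have h6 : ¬ w.rotate j < w.rotate k := by
      rw [h1, h3, hb, hx, List.cons_lt_cons_iff]; simp
    simp [h5, h6]

theorem auxRank_true (w : List Bool) (h : List.Chain' (· ≥ ·) (BWT w)) (k : ℕ)
    (hk : k < w.length) (hx : w[k] = true) :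
    auxRank w (k+1) + w.count false = auxRank w k := by
  rw [auxRank_shift, auxRank, aux_count w false, ← Finset.sum_add_distrib]
  apply Finset.sum_congr rfl
  intro j hj
  have hj := Finset.mem_range.1 hj
  have hc := aux_cluster w h j k hj hk
  obtain ⟨s, h1, h2⟩ := aux_rot w j hj
  obtain ⟨t, h3, h4⟩ := aux_rot w k hk
  have hl : s.length = t.length := by
    have e1 := congrArg List.length h1
    have e2 := congrArg List.length h3
    simp at e1 e2; omega
  rw [List.getElem?_eq_getElem hj]
  cases hb : w[j]
  · rw [hb, hx] at hc
    have h5 : ¬ w.rotate (j+1) < w.rotate (k+1) := fun h => absurd (hc h) (by decide)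
    have h6 : w.rotate j < w.rotate k := by
      rw [h1, h3, hb, hx, List.cons_lt_cons_iff]; simp
    simp [h5, h6]
  · rw [hb] at h1 h2
    rw [hx] at h3 h4
    rw [h1, h2, h3, h4]
    simp [aux_append_lt true s t hl]

theorem aux_len (w : List Bool) : w.count true + w.count false = w.length := by
  induction w with
  | nil => simp
  | cons a w ih => cases a <;> simp <;> omega

theorem aux_main (w : List Bool) (hw : LowerChristoffel w) (k : ℕ) (hk : k ≤ w.length) :
    auxRank w k + w.length * (w.take k).count true = k * w.count true := by
  obtain ⟨⟨_, hc⟩, hne, hL⟩ := hw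
  induction k with
  | zero =>
    simp only [List.take_zero, List.count_nil, mul_zero, add_zero, zero_mul, auxRank]
    apply Finset.sum_eq_zero
    intro j _
    rw [if_neg]
    rw [List.rotate_zero]
    exact not_lt.2 (hL j)
  | succ k ih =>
    have ih := ih (by omega)
    have hk' : k < w.length := by omega
    have hlen := aux_len w
    rw [← List.take_append_getElem hk', List.count_append]
    cases hb : w[k]
    · have := auxRank_false w hc k hk' hb
      simp only [List.count_singleton]
      simp
      linarith
    · have := auxRank_true w hc k hk' hb
      simp only [List.count_singleton]
      simp
      linarith

theorem aux_floor (w : List Bool) (hw : LowerChristoffel w) (k : ℕ) (hk : k ≤ w.length) :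
    (w.take k).count true = k * w.count true / w.length := by
  have h1 := aux_main w hw k hk
  have h2 := auxRank_lt w k hw.2.1
  symm
  rw [← h1, Nat.add_mul_div_left _ _ (by omega), Nat.div_eq_of_lt h2, zero_add]

theorem aux_power (p : List Bool) : ∀ (d : ℕ) (s : List Bool), p ++ s = s ++ p →
    s.length = d * p.length → s = (List.replicate d p).flatten := by
  intro d
  induction d with
  | zero => intro s _ h; simpa using h
  | succ d ih =>
    intro s h hl
    have hle : p.length ≤ s.length := by rw [hl, add_mul]; omega
    have hp : p <+: s := by
      have h1 : p <+: s ++ p := ⟨s, h⟩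
      exact List.prefix_of_prefix_length_le h1 (List.prefix_append _ _) hle
    obtain ⟨s', rfl⟩ := hp
    rw [List.append_assoc, List.append_cancel_left_eq] at h
    rw [List.replicate_succ, List.flatten_cons]
    rw [← ih s' h (by simp at hl; linarith)]

theorem aux_coprime (w : List Bool) (hw : LowerChristoffel w) :
    Nat.Coprime w.length (w.count true) := by
  have hpos : 0 < w.length := List.length_pos_iff.2 hw.2.1
  obtain ⟨m, hm⟩ := Nat.gcd_dvd_left w.length (w.count true)
  obtain ⟨r, hr⟩ := Nat.gcd_dvd_right w.length (w.count true)
  unfold Nat.Coprime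
  generalize Nat.gcd w.length (w.count true) = d at *
  rcases d with _ | d
  · omega
  have hmn : m ≤ w.length := by rw [hm]; nlinarith
  have h1 := aux_main w hw m hmn
  have h2 := auxRank_lt w m hw.2.1
  have h3 : auxRank w m = 0 := by
    have e : m * w.count true = w.length * r := by rw [hr, hm]; ring
    rw [e] at h1
    have : w.length ∣ auxRank w m :=
      (Nat.dvd_add_left (Dvd.intro _ rfl)).1 (h1 ▸ Dvd.intro _ rfl)
    exact Nat.eq_zero_of_dvd_of_lt this h2
  have h4 : w.rotate m = w := by
    apply le_antisymm _ (hw.2.2 m)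
    have := (Finset.sum_eq_zero_iff.1 h3) 0 (Finset.mem_range.2 hpos)
    by_contra hc
    rw [List.rotate_zero, if_pos (not_le.1 hc)] at this
    omega
  rw [List.rotate_eq_drop_append_take hmn] at h4
  have h5 := aux_power (w.take m) d (w.drop m) (by rw [h4, List.take_append_drop])
    (by simp [min_eq_left hmn]; rw [hm, add_mul]; omega)
  apply hw.1.1.2 (w.take m)
  rw [List.replicate_succ, List.flatten_cons, ← h5, List.take_append_drop]

theorem aux_cmp : ∀ (u v : List Bool),
    (∀ k, k ≤ u.length → k ≤ v.length → (u.take k).count true ≤ (v.take k).count true) →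
    u ≤ v ∨ v <+: u
  | [], v, _ => Or.inl (not_lt.1 (by simp))
  | _ :: _, [], _ => Or.inr (by simp)
  | a :: u, b :: v, h => by
    have h1 := h 1 (by simp) (by simp)
    by_cases hab : a = b
    · subst hab
      have ih := aux_cmp u v (by
        intro k hu hv
        have := h (k+1) (by simpa using hu) (by simpa using hv)
        simpa [List.count_cons] using this)
      rcases ih with ih | ih
      · left; rw [← not_lt, List.cons_lt_cons_iff]; simpa using ih
      · right; simpa using ih
    · left
      rw [← not_lt, List.cons_lt_cons_iff]
      revert h1 hab
      cases a <;> cases b <;> simp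

theorem aux_lt (u v : List Bool) (hu : LowerChristoffel u) (hv : LowerChristoffel v)
    (h : u.count true * v.length < v.count true * u.length) : u < v := by
  have hup : 0 < u.length := List.length_pos_iff.2 hu.2.1
  have hvp : 0 < v.length := List.length_pos_iff.2 hv.2.1
  rcases aux_cmp u v (by
    intro k h1 h2
    rw [aux_floor u hu k h1, aux_floor v hv k h2, Nat.le_div_iff_mul_le hvp]
    have := Nat.div_mul_le_self (k * u.count true) u.length
    generalize k * u.count true / u.length = c at *
    have h3 : c * v.length * u.length ≤ k * v.count true * u.length := by
      calc c * v.length * u.length = (c * u.length) * v.length := by ring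
        _ ≤ k * u.count true * v.length := Nat.mul_le_mul_right _ this
        _ = k * (u.count true * v.length) := by ring
        _ ≤ k * (v.count true * u.length) := Nat.mul_le_mul_left _ h.le
        _ = _ := by ring
    exact Nat.le_of_mul_le_mul_right h3 hup) with h1 | h1
  · refine lt_of_le_of_ne h1 ?_
    rintro rfl
    exact lt_irrefl _ h
  · exfalso
    have h2 := aux_floor u hu v.length h1.length_le
    rw [← List.prefix_iff_eq_take.1 h1] at h2
    have := Nat.div_mul_le_self (v.length * u.count true) u.length
    rw [← h2] at this
    linarith

theorem aux_eq (u v : List Bool) (hu : LowerChristoffel u) (hv : LowerChristoffel v)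
    (h : u.count true * v.length = v.count true * u.length) : u = v := by
  have hup : 0 < u.length := List.length_pos_iff.2 hu.2.1
  have hl : u.length = v.length := by
    apply Nat.dvd_antisymm
    · apply (aux_coprime u hu).dvd_of_dvd_mul_left
      rw [h]; exact Dvd.intro_left _ rfl
    · apply (aux_coprime v hv).dvd_of_dvd_mul_left
      rw [← h]; exact Dvd.intro_left _ rfl
  have hq : u.count true = v.count true := by
    rw [← hl] at h
    exact Nat.eq_of_mul_eq_mul_right hup h
  have hc : ∀ k, k ≤ u.length → (u.take k).count true = (v.take k).count true := by
    intro k hk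
    rw [aux_floor u hu k hk, aux_floor v hv k (hl ▸ hk), hl, hq]
  rcases aux_cmp u v (fun k h1 _ => (hc k h1).le) with h1 | h1
  · rcases aux_cmp v u (fun k _ h1 => (hc k h1).ge) with h2 | h2
    · exact le_antisymm h1 h2
    · exact h2.eq_of_length hl
  · exact (h1.eq_of_length hl.symm).symm

theorem aux_slope (u v : List Bool) (hu : u ≠ []) (hv : v ≠ []) :
    wordSlope u < wordSlope v ↔ u.count true * v.length < v.count true * u.length := by
  have hup : 0 < u.length := List.length_pos_iff.2 hu
  have hvp : 0 < v.length := List.length_pos_iff.2 hv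
  have e1 := aux_len u
  have e2 := aux_len v
  rw [← e1] at hup ⊢
  rw [← e2] at hvp ⊢
  unfold wordSlope
  generalize u.count true = q at *
  generalize v.count true = q' at *
  generalize u.count false = p at *
  generalize v.count false = p' at *
  have hk : q * (q' + p') < q' * (q + p) ↔ q * p' < q' * p := by
    constructor <;> intro h <;> nlinarith
  rw [hk]
  split_ifs with h1 h2 h2
  · subst h1; simp
  · subst h1; simp
  · subst h2
    simp only [WithTop.coe_lt_top, true_iff, mul_zero]
    exact Nat.mul_pos (by omega) (by omega)
  · rw [WithTop.coe_lt_coe, div_lt_div_iff₀ (by positivity) (by positivity)]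
    exact_mod_cast Iff.rfl

theorem stmt3 (u v : List Bool) (hu : LowerChristoffel u) (hv : LowerChristoffel v) :
    u < v ↔ wordSlope u < wordSlope v := by
  rw [aux_slope u v hu.2.1 hv.2.1]
  constructor
  · intro h
    by_contra hc
    rcases (not_lt.1 hc).lt_or_eq with h1 | h1
    · exact lt_asymm h (aux_lt v u hv hu h1)
    · rw [aux_eq v u hv hu h1] at h
      exact lt_irrefl _ h
  · exact aux_lt u v hu hv
end

section
/- The Gessel–Reutenauer map Φ, sending a word w over a totally ordered alphabet to the multiset of primitive necklaces formed from the cycles of the inverse of the standard permutation of w, is a bijection between words of length n and multisets of primitive necklaces with n total letters. -/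
variable {α : Type*}

/-- Positions of the word sorted by letter (ties broken by position),
i.e. the list whose `r`-th entry is the position of rank `r`. -/
def sortedPositions [LinearOrder α] (w : List α) : List (Fin w.length) :=
  List.insertionSort (fun i j => toLex (w.get i, (i:ℕ)) ≤ toLex (w.get j, (j:ℕ)))
    (List.finRange w.length)

theorem length_sortedPositions [LinearOrder α] (w : List α) :
    (sortedPositions w).length = w.length := by
  simp [sortedPositions]

/-- The inverse of the standard permutation of `w`: `tau w r` is the position
of the letter of rank `r`. -/
def tau [LinearOrder α] (w : List α) : Fin w.length → Fin w.length :=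
  fun r => (sortedPositions w).get (Fin.cast (length_sortedPositions w).symm r)

/-- The word read along the cycle of `tau w` through position `j`. -/
noncomputable def cycleWord [LinearOrder α] (w : List α) (j : Fin w.length) : List α :=
  (List.range (Function.minimalPeriod (tau w) j)).map (fun t => w.get ((tau w)^[t] j))

/-- A necklace is a conjugacy (rotation) class of words. -/
def Necklace (α : Type*) := Quotient (List.IsRotated.setoid α)

def Necklace.mk (w : List α) : Necklace α := Quotient.mk (List.IsRotated.setoid α) w

/-- The length of a necklace. -/
def Necklace.length : Necklace α → ℕ :=
  Quotient.lift List.length (fun a b h => by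
    obtain ⟨k, hk⟩ := h
    rw [← hk, List.length_rotate])

/-- A necklace is primitive if it is the class of a primitive word. -/
def Necklace.IsPrimitive (x : Necklace α) : Prop :=
  ∃ w : List α, Necklace.mk w = x ∧ IsPrimitiveWord w

/-- The Gessel–Reutenauer map: the multiset of necklaces obtained from the
cycles of the inverse of the standard permutation of `w` (one necklace per
cycle, read from the minimal position of the cycle). -/
noncomputable def Phi [LinearOrder α] (w : List α) : Multiset (Necklace α) :=
  ((Finset.univ.filter (fun j : Fin w.length =>
      ∀ t < w.length, (j : ℕ) ≤ (((tau w)^[t] j : Fin w.length) : ℕ))).val).map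
    (fun j => Necklace.mk (cycleWord w j))

open Function

namespace GR

/-! ### Injective self-maps of `Fin n` -/

section Orbits
variable {n : ℕ} {f : Fin n → Fin n}

theorem mp_pos (hf : Injective f) (j : Fin n) : 0 < minimalPeriod f j :=
  minimalPeriod_pos_of_mem_periodicPts (hf.mem_periodicPts j)

theorem mp_le (j : Fin n) : minimalPeriod f j ≤ n := by
  simpa using (minimalPeriod_le_card (f := f) (x := j))

theorem orbit_lt (hf : Injective f) (j : Fin n) (t : ℕ) :
    ∃ s < minimalPeriod f j, f^[s] j = f^[t] j :=
  ⟨t % minimalPeriod f j, Nat.mod_lt _ (mp_pos hf j), iterate_mod_minimalPeriod_eq⟩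

theorem min_iff (hf : Injective f) (j : Fin n) :
    (∀ t < n, (j : ℕ) ≤ ((f^[t] j : Fin n) : ℕ)) ↔ ∀ t, j ≤ f^[t] j := by
  constructor
  · intro h t
    obtain ⟨s, hs, e⟩ := orbit_lt hf j t
    rw [← e]
    exact h s (lt_of_lt_of_le hs (mp_le j))
  · intro h t _
    exact h t

theorem orbit_back (hf : Injective f) (j : Fin n) (t : ℕ) : ∃ s, f^[s] (f^[t] j) = j := by
  have h0 := mp_pos hf j
  refine ⟨minimalPeriod f j * t - t, ?_⟩
  rw [← iterate_add_apply]
  have : minimalPeriod f j * t - t + t = minimalPeriod f j * t :=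
    Nat.sub_add_cancel (Nat.le_mul_of_pos_left t h0)
  rw [this]
  exact (isPeriodicPt_iff_minimalPeriod_dvd.2 (Dvd.intro _ rfl))

theorem orbit_min (hf : Injective f) (j : Fin n) :
    ∃ t, ∀ s, f^[t] j ≤ f^[s] (f^[t] j) := by
  obtain ⟨x, ⟨t, rfl⟩, hx⟩ := (Set.range (fun t => f^[t] j)).exists_min_image id
    (Set.toFinite _) ⟨_, ⟨0, rfl⟩⟩
  refine ⟨t, fun s => ?_⟩
  have := hx (f^[s + t] j) ⟨s + t, rfl⟩
  simpa [iterate_add_apply] using this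

/-- Minimal representatives of the orbits. -/
def reps (f : Fin n → Fin n) : Finset (Fin n) :=
  Finset.univ.filter (fun j : Fin n => ∀ t < n, (j : ℕ) ≤ ((f^[t] j : Fin n) : ℕ))

theorem mem_reps (hf : Injective f) {j : Fin n} : j ∈ reps f ↔ ∀ t, j ≤ f^[t] j := by
  simp only [reps, Finset.mem_filter, Finset.mem_univ, true_and]
  exact min_iff hf j

theorem reps_unique (hf : Injective f) {i j : Fin n} (hi : i ∈ reps f) (hj : j ∈ reps f)
    {t : ℕ} (h : f^[t] i = j) : i = j := by
  rw [mem_reps hf] at hi hj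
  obtain ⟨s, hs⟩ := orbit_back hf i t
  apply le_antisymm
  · rw [← h]; exact hi t
  · have := hj s
    rwa [← h, hs, h] at this

theorem univ_eq_bind (hf : Injective f) :
    (Finset.univ : Finset (Fin n)).val = (reps f).val.bind
      (fun j => (Multiset.range (minimalPeriod f j)).map (fun t => f^[t] j)) := by
  refine (Multiset.Nodup.ext Finset.univ.nodup ?_).2 ?_
  · rw [Multiset.nodup_bind]
    constructor
    · intro j _
      refine Multiset.Nodup.map_on ?_ (Multiset.nodup_range _)
      intro x hx y hy hxy
      rw [Multiset.mem_range] at hx hy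
      exact iterate_injOn_Iio_minimalPeriod hx hy hxy
    · refine Multiset.Nodup.pairwise ?_ (reps f).nodup
      intro a ha b hb hab
      rw [onFun, Multiset.disjoint_left]
      intro x hx hx'
      rw [Multiset.mem_map] at hx hx'
      obtain ⟨t, _, rfl⟩ := hx
      obtain ⟨s, _, hs⟩ := hx'
      obtain ⟨r, hr⟩ := orbit_back hf b s
      apply hab
      refine reps_unique hf ha hb (t := r + t) ?_
      rw [iterate_add_apply, ← hs, hr]
  · intro a
    simp only [Finset.mem_val, Finset.mem_univ, true_iff, Multiset.mem_bind, Multiset.mem_map,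
      Multiset.mem_range]
    obtain ⟨t, ht⟩ := orbit_min hf a
    obtain ⟨s, hs⟩ := orbit_back hf a t
    obtain ⟨r, hr, e⟩ := orbit_lt hf (f^[t] a) s
    exact ⟨f^[t] a, (mem_reps hf).2 ht, r, hr, by rw [e, hs]⟩

end Orbits

/-! ### Primitive words -/

section Prim
variable {α : Type*}

theorem rotate_iter (v : List α) (d : ℕ) : (fun l : List α => l.rotate 1)^[d] v = v.rotate d := by
  induction d with
  | zero => simp
  | succ d ih => rw [iterate_succ_apply', ih, List.rotate_rotate]

theorem pow_aux (u : List α) (k : ℕ) : ∀ v : List α, v.length = k * u.length →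
    v ++ u = u ++ v → v = (List.replicate k u).flatten := by
  induction k with
  | zero => intro v hv _; simpa using hv
  | succ k ih =>
    intro v hv h
    have hp : u <+: v := by
      refine List.prefix_of_prefix_length_le (l₃ := v ++ u) ?_ (List.prefix_append _ _) ?_
      · rw [h]; exact List.prefix_append _ _
      · rw [hv]; nlinarith
    obtain ⟨v', rfl⟩ := hp
    rw [List.append_assoc, List.append_cancel_left_eq] at h
    rw [List.replicate_succ, List.flatten_cons, ← ih v' _ h]
    rw [List.length_append] at hv
    linarith [Nat.succ_mul k u.length]

theorem prim_iff (v : List α) :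
    IsPrimitiveWord v ↔ v ≠ [] ∧ ∀ d, v.rotate d = v → v.length ∣ d := by
  constructor
  · rintro ⟨h0, h⟩
    refine ⟨h0, fun d hd => ?_⟩
    have hpos : 0 < v.length := List.length_pos_iff.2 h0
    have h1 : IsPeriodicPt (fun l : List α => l.rotate 1) d v := by
      rw [IsPeriodicPt, IsFixedPt, rotate_iter, hd]
    have h2 : IsPeriodicPt (fun l : List α => l.rotate 1) v.length v := by
      rw [IsPeriodicPt, IsFixedPt, rotate_iter, List.rotate_length]
    have h3 := h1.gcd h2
    rw [IsPeriodicPt, IsFixedPt, rotate_iter] at h3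
    set g := d.gcd v.length with hg
    have hgd : g ∣ v.length := Nat.gcd_dvd_right _ _
    have hgle : g ≤ v.length := Nat.le_of_dvd hpos hgd
    obtain ⟨k, hk⟩ := hgd
    have hlen : (v.take g).length = g := by simp [hgle]
    have hv : v = (List.replicate k (v.take g)).flatten := by
      apply pow_aux
      · rw [hlen, hk, mul_comm]
      · rw [List.rotate_eq_drop_append_take hgle] at h3
        have h4 : (v.take g ++ v.drop g) ++ v.take g = v.take g ++ v := by
          rw [List.append_assoc, h3]
        rwa [List.take_append_drop] at h4
    have hk1 := h _ _ hv
    subst hk1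
    rw [hk, mul_one]
    exact Nat.gcd_dvd_left _ _
  · rintro ⟨h0, h⟩
    refine ⟨h0, fun u k hv => ?_⟩
    rcases k with _ | k
    · simp at hv; exact absurd hv h0
    have hr : v.rotate u.length = v := by
      rw [hv, List.replicate_succ, List.flatten_cons, List.rotate_append_length_eq]
      clear hv
      induction k with
      | zero => simp
      | succ k ih => simp [List.replicate_succ, ih]
    have hd := h _ hr
    have hl : v.length = (k + 1) * u.length := by rw [hv]; simp
    have hpos : 0 < v.length := List.length_pos_iff.2 h0
    have hu : 0 < u.length := by
      rcases Nat.eq_zero_or_pos u.length with h | h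
      · rw [h] at hl; omega
      · exact h
    have := Nat.le_of_dvd hu hd
    nlinarith

end Prim

/-! ### The map `tau` -/

section Tau
variable {α : Type*} [LinearOrder α]

/-- Sorting key of a position. -/
def pkey (w : List α) (i : Fin w.length) : α ×ₗ ℕ := toLex (w.get i, (i : ℕ))

theorem pkey_inj (w : List α) : Injective (pkey w) := by
  intro i j h
  have := congrArg (fun x => (ofLex x).2) h
  exact Fin.ext this

theorem sp_perm (w : List α) : (sortedPositions w).Perm (List.finRange w.length) :=
  List.perm_insertionSort _ _

theorem sp_sorted (w : List α) :
    (sortedPositions w).Pairwise (fun i j => pkey w i ≤ pkey w j) := by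
  have : Std.Total (fun i j : Fin w.length =>
      toLex (w.get i, (i:ℕ)) ≤ toLex (w.get j, (j:ℕ))) := ⟨fun a b => le_total _ _⟩
  have : IsTrans (Fin w.length) (fun i j : Fin w.length =>
      toLex (w.get i, (i:ℕ)) ≤ toLex (w.get j, (j:ℕ))) := ⟨fun a b c h h' => le_trans h h'⟩
  exact List.pairwise_insertionSort _ _

theorem tau_inj (w : List α) : Injective (tau w) := by
  have hn : (sortedPositions w).Nodup := (sp_perm w).nodup_iff.2 (List.nodup_finRange _)
  intro i j h
  have := hn.injective_get h
  simpa [Fin.ext_iff] using this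

theorem tau_strictMono (w : List α) : StrictMono (fun r => pkey w (tau w r)) := by
  intro i j hij
  refine lt_of_le_of_ne ?_ ?_
  · exact List.pairwise_iff_get.1 (sp_sorted w) _ _ (by simpa using hij)
  · intro h
    exact hij.ne (tau_inj w (pkey_inj w h))

theorem tau_unique (w : List α) (g : Fin w.length → Fin w.length) (hg : Injective g)
    (h : StrictMono (fun r => pkey w (g r))) : g = tau w := by
  have hs : Set.range (fun r => pkey w (g r)) = Set.range (fun r => pkey w (tau w r)) := by
    have h1 := (Finite.injective_iff_surjective.1 hg).range_comp (pkey w)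
    have h2 := (Finite.injective_iff_surjective.1 (tau_inj w)).range_comp (pkey w)
    exact h1.trans h2.symm
  have := (StrictMono.range_inj h (tau_strictMono w)).1 hs
  funext r
  exact pkey_inj w (congrFun this r)

theorem tau_step (w : List α) {i j : Fin w.length} (h : i < j) :
    w.get (tau w i) < w.get (tau w j) ∨
      w.get (tau w i) = w.get (tau w j) ∧ tau w i < tau w j := by
  have := tau_strictMono w h
  simp only [pkey, Prod.Lex.toLex_lt_toLex] at this
  exact this

theorem tau_iter_lt (w : List α) {i j : Fin w.length} (h : i < j) (t : ℕ)
    (he : ∀ s < t, w.get ((tau w)^[s + 1] i) = w.get ((tau w)^[s + 1] j)) :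
    (tau w)^[t] i < (tau w)^[t] j := by
  induction t with
  | zero => exact h
  | succ t ih =>
    have h1 := ih (fun s hs => he s (by omega))
    have h2 := he t (by omega)
    rw [iterate_succ_apply', iterate_succ_apply'] at h2 ⊢
    rcases tau_step w h1 with h3 | h3
    · exact absurd h2 h3.ne
    · exact h3.2

/-- The infinite word read after position `j`. -/
def sq (w : List α) (j : Fin w.length) : Lex (ℕ → α) :=
  toLex (fun t => w.get ((tau w)^[t + 1] j))

theorem sq_mono (w : List α) : Monotone (sq w) := by
  intro i j hij
  rcases hij.eq_or_lt with rfl | hij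
  · exact le_rfl
  by_cases he : ∃ t, w.get ((tau w)^[t + 1] i) ≠ w.get ((tau w)^[t + 1] j)
  · classical
    apply le_of_lt
    have h1 : ∀ s < Nat.find he, w.get ((tau w)^[s + 1] i) = w.get ((tau w)^[s + 1] j) := by
      intro s hs
      have := Nat.find_min he hs
      rwa [not_not] at this
    refine ⟨Nat.find he, h1, ?_⟩
    have h2 := tau_iter_lt w hij (Nat.find he) h1
    have h3 := Nat.find_spec he
    show w.get ((tau w)^[Nat.find he + 1] i) < w.get ((tau w)^[Nat.find he + 1] j)
    rcases tau_step w h2 with h4 | h4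
    · simpa only [iterate_succ_apply'] using h4
    · exfalso
      apply h3
      rw [iterate_succ_apply', iterate_succ_apply']
      exact h4.1
  · push Not at he
    apply le_of_eq
    exact congrArg toLex (funext he)

theorem length_cycleWord (w : List α) (j : Fin w.length) :
    (cycleWord w j).length = minimalPeriod (tau w) j := by
  simp [cycleWord]

theorem cycleWord_ne (w : List α) (j : Fin w.length) : cycleWord w j ≠ [] := by
  rw [← List.length_pos_iff, length_cycleWord]
  exact mp_pos (tau_inj w) j

theorem cycleWord_iter (w : List α) (j : Fin w.length) (d : ℕ) :
    cycleWord w ((tau w)^[d] j) = (cycleWord w j).rotate d := by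
  have hp := minimalPeriod_apply_iterate ((tau_inj w).mem_periodicPts j) d
  apply List.ext_getElem
  · simp [length_cycleWord, hp]
  · intro t h1 h2
    rw [List.getElem_rotate]
    simp only [cycleWord, List.getElem_map, List.getElem_range, List.length_map,
      List.length_range, iterate_mod_minimalPeriod_eq, iterate_add_apply]

theorem cycleWord_mod (w : List α) (j : Fin w.length) (t : ℕ) (a : α) :
    (cycleWord w j).getD (t % (cycleWord w j).length) a = w.get ((tau w)^[t] j) := by
  have : t % (cycleWord w j).length < (cycleWord w j).length :=
    Nat.mod_lt _ (List.length_pos_iff.2 (cycleWord_ne w j))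
  rw [List.getD_eq_getElem _ _ this]
  simp only [cycleWord, List.getElem_map, List.getElem_range, List.length_map,
      List.length_range, iterate_mod_minimalPeriod_eq]

theorem no_asc {n : ℕ} (g : ℕ → Fin n) (h : ∀ t, g t < g (t + 1)) : False :=
  not_injective_infinite_finite g (strictMono_nat_of_lt_succ h).injective

theorem no_desc {n : ℕ} (g : ℕ → Fin n) (h : ∀ t, g (t + 1) < g t) : False :=
  not_injective_infinite_finite g (strictAnti_nat_of_succ_lt h).injective

theorem cycleWord_prim (w : List α) (j : Fin w.length) : IsPrimitiveWord (cycleWord w j) := by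
  rw [prim_iff]
  refine ⟨cycleWord_ne w j, fun d hd => ?_⟩
  rw [length_cycleWord, ← isPeriodicPt_iff_minimalPeriod_dvd]
  rw [← cycleWord_iter] at hd
  have hs : ∀ t, w.get ((tau w)^[t] ((tau w)^[d] j)) = w.get ((tau w)^[t] j) := by
    intro t
    rw [← cycleWord_mod w _ t (w.get j), ← cycleWord_mod w j t (w.get j), hd]
  have e1 : ∀ t, (tau w)^[d * t] ((tau w)^[d] j) = (tau w)^[d * (t + 1)] j := by
    intro t
    rw [← iterate_add_apply, Nat.mul_succ]
  by_contra hne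
  rcases lt_or_gt_of_ne hne with h | h
  · refine no_desc (fun t => (tau w)^[d * t] j) (fun t => ?_)
    have := tau_iter_lt w h (d * t) (fun s _ => hs (s + 1))
    rwa [e1] at this
  · refine no_asc (fun t => (tau w)^[d * t] j) (fun t => ?_)
    have := tau_iter_lt w h (d * t) (fun s _ => (hs (s + 1)).symm)
    rwa [e1] at this

theorem Phi_eq (w : List α) :
    Phi w = (reps (tau w)).val.map (fun j => Necklace.mk (cycleWord w j)) := rfl

theorem part1 (w : List α) :
    ((Phi w).map Necklace.length).sum = w.length ∧ ∀ x ∈ Phi w, x.IsPrimitive := by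
  constructor
  · have h := congrArg Multiset.card (univ_eq_bind (tau_inj w))
    rw [Multiset.card_bind] at h
    rw [Phi_eq, Multiset.map_map]
    have h' : (Finset.univ : Finset (Fin w.length)).val.card = w.length := by simp
    rw [h'] at h
    refine Eq.trans ?_ h.symm
    congr 1
    apply Multiset.map_congr rfl
    intro j _
    simp only [comp, Multiset.card_map, Multiset.card_range]
    exact length_cycleWord w j
  · intro x hx
    rw [Phi_eq, Multiset.mem_map] at hx
    obtain ⟨j, _, rfl⟩ := hx
    exact ⟨_, rfl, cycleWord_prim w j⟩

/-- Multiset of rotations of a necklace. -/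
def rots : Necklace α → Multiset (List α) :=
  Quotient.lift (fun v : List α => (v.cyclicPermutations : Multiset (List α)))
    (fun _ _ h => Multiset.coe_eq_coe.2 (List.IsRotated.perm (List.IsRotated.cyclicPermutations h)))

theorem rots_mk (v : List α) (hv : v ≠ []) :
    rots (Necklace.mk v) = (Multiset.range v.length).map (fun t => v.rotate t) := by
  show ((v.cyclicPermutations : List (List α)) : Multiset (List α)) = _
  rw [← Multiset.coe_range, Multiset.map_coe]
  congr 1
  apply List.ext_getElem
  · simp [List.length_cyclicPermutations_of_ne_nil v hv]
  · intro t h1 h2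
    simp

theorem map_cycleWord (w : List α) :
    (Finset.univ : Finset (Fin w.length)).val.map (cycleWord w) = (Phi w).bind rots := by
  rw [univ_eq_bind (tau_inj w), Multiset.map_bind, Phi_eq, Multiset.bind_map]
  apply Multiset.bind_congr
  intro j _
  rw [rots_mk _ (cycleWord_ne w j), Multiset.map_map, length_cycleWord]
  apply Multiset.map_congr rfl
  intro t _
  exact cycleWord_iter w j t

theorem map_sq (w : List α) (a : α) :
    (Finset.univ : Finset (Fin w.length)).val.map (sq w) = ((Phi w).bind rots).map
      (fun v => (toLex (fun t => v.getD ((t + 1) % v.length) a) : Lex (ℕ → α))) := by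
  rw [← map_cycleWord, Multiset.map_map]
  apply Multiset.map_congr rfl
  intro j _
  show toLex _ = toLex _
  congr 1
  funext t
  exact (cycleWord_mod w j (t + 1) a).symm

theorem recover (w : List α) :
    w = ((List.finRange w.length).map (sq w)).map (fun s : Lex (ℕ → α) => ofLex s (w.length.factorial - 1)) := by
  rw [List.map_map]
  apply List.ext_getElem
  · simp
  · intro j h1 h2
    simp only [List.getElem_map, List.getElem_finRange, comp, sq, ofLex_toLex]
    rw [Nat.sub_add_cancel (Nat.factorial_pos _)]
    have : (tau w)^[w.length.factorial] ⟨j, h1⟩ = ⟨j, h1⟩ :=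
      isPeriodicPt_iff_minimalPeriod_dvd.2
        (Nat.dvd_factorial (mp_pos (tau_inj w) _) (mp_le _))
    simp only [Fin.cast_mk, this, List.get_eq_getElem]

theorem part2 (w w' : List α) (hl : w.length = w'.length) (h : Phi w = Phi w') : w = w' := by
  rcases w with _ | ⟨a, u⟩
  · exact (List.length_eq_zero_iff.1 hl.symm).symm
  generalize hw : a :: u = w at *
  have hm := (map_sq w a).trans ((by rw [h]) : _ = _) |>.trans (map_sq w' a).symm
  have hs : ∀ w : List α, ((List.finRange w.length).map (sq w)).Pairwise (· ≤ ·) := by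
    intro w
    rw [List.pairwise_map]
    exact (List.pairwise_lt_finRange _).imp (fun h => sq_mono w h.le)
  have hp : ((List.finRange w.length).map (sq w)).Perm ((List.finRange w'.length).map (sq w')) :=
    Multiset.coe_eq_coe.1 hm
  have he := List.Perm.eq_of_pairwise (fun _ _ _ _ h h' => le_antisymm h h') (hs w) (hs w') hp
  rw [recover w, recover w', he, hl]

end Tau

/-! ### Surjectivity -/

section Surj
variable {α : Type*} [LinearOrder α]

theorem exists_enum {I β : Type*} [Fintype I] [LinearOrder β] (key : I → β) (hk : Injective key)
    {n : ℕ} (hn : Fintype.card I = n) : ∃ e : Fin n ≃ I, StrictMono (fun j => key (e j)) := by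
  let _ : LinearOrder I := LinearOrder.lift' key hk
  let e := Fintype.orderIsoFinOfCardEq I hn
  exact ⟨e.toEquiv, fun i j h => e.strictMono h⟩

/-- Positions in a family of words. -/
abbrev Pos {k : ℕ} (v : Fin k → List α) := Σ i : Fin k, Fin (v i).length

variable {k : ℕ} (v : Fin k → List α)

/-- Letter at a position. -/
def lab (x : Pos v) : α := (v x.1).get x.2

/-- Move by `u` steps cyclically. -/
def mv (u : ℕ) (x : Pos v) : Pos v :=
  ⟨x.1, ⟨(x.2 + u) % (v x.1).length, Nat.mod_lt _ x.2.pos⟩⟩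

theorem mv_mv (a b : ℕ) (x : Pos v) : mv v a (mv v b x) = mv v (b + a) x := by
  simp [mv, add_assoc]

theorem mv_iter (u : ℕ) (x : Pos v) : (mv v 1)^[u] x = mv v u x := by
  induction u with
  | zero =>
    obtain ⟨i, t⟩ := x
    simp [mv, Nat.mod_eq_of_lt t.2]
  | succ u ih => rw [iterate_succ_apply', ih, mv_mv]

theorem mv_eq_self (u : ℕ) (x : Pos v) : mv v u x = x ↔ (v x.1).length ∣ u := by
  obtain ⟨i, t⟩ := x
  simp only [mv, Sigma.mk.injEq, heq_eq_eq, true_and, Fin.ext_iff]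
  constructor
  · intro h
    have h2 : (t + u : ℕ) ≡ t + 0 [MOD (v i).length] := by
      rw [Nat.ModEq, h, add_zero, Nat.mod_eq_of_lt t.2]
    exact (Nat.modEq_zero_iff_dvd).1 (Nat.ModEq.add_left_cancel' _ h2)
  · rintro ⟨c, rfl⟩
    simp [Nat.mod_eq_of_lt t.2]

theorem mv_one_inj : Injective (mv v 1) := by
  intro x y h
  have h0 := congrArg (fun z : Pos v => z.1) h
  have h1 : x.1 = y.1 := h0
  have h2 := congrArg (mv v ((v x.1).length - 1)) h
  have hp : 0 < (v x.1).length := x.2.pos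
  rw [mv_mv, mv_mv, Nat.add_sub_cancel' hp] at h2
  rwa [(mv_eq_self v _ x).2 dvd_rfl, (mv_eq_self v _ y).2 (by rw [h1])] at h2

theorem lab_mv (u : ℕ) (x : Pos v) :
    (v x.1).rotate x.2 = (List.range (v x.1).length).map (fun u => lab v (mv v u x)) := by
  apply List.ext_getElem
  · simp
  · intro t h1 h2
    rw [List.getElem_rotate]
    simp [lab, mv, add_comm]

/-- The sorting key of a position. -/
def skey (x : Pos v) : Lex (ℕ → α) ×ₗ Fin k :=
  toLex (toLex (fun u => lab v (mv v (u + 1) x)), x.1)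

theorem skey_inj (hv : ∀ i, IsPrimitiveWord (v i)) : Injective (skey v) := by
  rintro ⟨i, s⟩ ⟨j, t⟩ h
  have h1 : i = j := congrArg (fun z => (ofLex z).2) h
  subst h1
  have h2 : ∀ u, lab v (mv v (u + 1) ⟨i, s⟩) = lab v (mv v (u + 1) ⟨i, t⟩) := fun u =>
    congrFun (congrArg (fun z => ofLex (ofLex z).1) h) u
  have h3 : (v i).rotate s = (v i).rotate t := by
    rw [lab_mv v 0 ⟨i, s⟩, lab_mv v 0 ⟨i, t⟩]
    apply List.map_congr_left
    intro u _
    have h4 := h2 (u + ((v i).length - 1))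
    have hp : 0 < (v i).length := s.pos
    have e : u + ((v i).length - 1) + 1 = (v i).length + u := by omega
    rw [e, ← mv_mv, ← mv_mv, (mv_eq_self v _ ⟨i, s⟩).2 dvd_rfl,
      (mv_eq_self v _ ⟨i, t⟩).2 dvd_rfl] at h4
    exact h4
  have h5 := ((prim_iff _).1 (hv i)).2
  have key : ∀ s t : Fin (v i).length, (v i).rotate s = (v i).rotate t → s ≤ t → s = t := by
    intro s t h hst
    have h6 : ((v i).rotate (t - s : ℕ)).rotate s = (v i).rotate s := by
      rw [List.rotate_rotate, h, Nat.sub_add_cancel hst]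
    have h7 := h5 _ (List.rotate_injective _ h6)
    have h8 := Nat.eq_zero_of_dvd_of_lt h7 (by omega)
    apply Fin.ext
    have : (s : ℕ) ≤ t := hst
    omega
  rcases le_total s t with hst | hst
  · rw [key s t h3 hst]
  · rw [key t s h3.symm hst]

theorem skey_step {x y : Pos v} (h : skey v x < skey v y) :
    lab v (mv v 1 x) < lab v (mv v 1 y) ∨
      lab v (mv v 1 x) = lab v (mv v 1 y) ∧ skey v (mv v 1 x) < skey v (mv v 1 y) := by
  have hsh : ∀ u (x : Pos v), mv v (u + 1) (mv v 1 x) = mv v (u + 1 + 1) x := by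
    intro u x
    rw [mv_mv, add_comm]
  simp only [skey, Prod.Lex.toLex_lt_toLex] at h ⊢
  rcases h with h | ⟨h, h'⟩
  · obtain ⟨t, h1, h2⟩ := h
    rcases t with _ | t
    · exact Or.inl h2
    · refine Or.inr ⟨h1 0 (by simp), Or.inl ⟨t, ?_, ?_⟩⟩
      · intro s hs
        have := h1 (s + 1) (by simpa using hs)
        show lab v (mv v (s + 1) (mv v 1 x)) = lab v (mv v (s + 1) (mv v 1 y))
        rw [hsh, hsh]
        exact this
      · show lab v (mv v (t + 1) (mv v 1 x)) < lab v (mv v (t + 1) (mv v 1 y))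
        rw [hsh, hsh]
        exact h2
  · have h1 : ∀ u, lab v (mv v (u + 1) x) = lab v (mv v (u + 1) y) := fun u =>
      congrFun (congrArg ofLex h) u
    refine Or.inr ⟨h1 0, Or.inr ⟨?_, h'⟩⟩
    congr 1
    funext u
    rw [hsh, hsh]
    exact h1 (u + 1)

theorem surj_words (hv : ∀ i, IsPrimitiveWord (v i)) {n : ℕ} (hn : ∑ i, (v i).length = n) :
    ∃ w : List α, w.length = n ∧
      Phi w = (Finset.univ : Finset (Fin k)).val.map (fun i => Necklace.mk (v i)) := by
  obtain ⟨w, hw, e, he, hmono⟩ : ∃ w : List α, w.length = n ∧ ∃ e : Fin w.length ≃ Pos v,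
      (∀ j, w.get j = lab v (e j)) ∧ StrictMono (fun j => skey v (e j)) := by
    obtain ⟨e, he⟩ := exists_enum (skey v) (skey_inj v hv) (n := n) (by simp [hn])
    refine ⟨List.ofFn (fun j => lab v (e j)), by simp, (finCongr (by simp)).trans e, ?_, ?_⟩
    · intro j
      simp only [List.get_ofFn]
      rfl
    · intro i j hij
      exact he (by simpa using hij)
  refine ⟨w, hw, ?_⟩
  have htau : (fun j => e.symm (mv v 1 (e j))) = tau w := by
    apply tau_unique
    · exact e.symm.injective.comp ((mv_one_inj v).comp e.injective)
    · intro i j hij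
      simp only [pkey, Prod.Lex.toLex_lt_toLex, he, Equiv.apply_symm_apply]
      rcases skey_step v (hmono hij) with h | ⟨h, h'⟩
      · exact Or.inl h
      · refine Or.inr ⟨h, ?_⟩
        apply hmono.lt_iff_lt.1
        simpa using h'
  have hstep : ∀ j, e (tau w j) = mv v 1 (e j) := by
    intro j
    rw [← htau]
    simp
  have hiter : ∀ t j, e ((tau w)^[t] j) = mv v t (e j) := by
    intro t j
    rw [← mv_iter]
    induction t with
    | zero => rfl
    | succ t ih => rw [iterate_succ_apply', iterate_succ_apply', hstep, ih]
  have hper : ∀ j, minimalPeriod (tau w) j = (v (e j).1).length := by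
    intro j
    have : ∀ t, minimalPeriod (tau w) j ∣ t ↔ (v (e j).1).length ∣ t := by
      intro t
      rw [← isPeriodicPt_iff_minimalPeriod_dvd, ← mv_eq_self, ← hiter, e.apply_eq_iff_eq]
      rfl
    exact Nat.dvd_antisymm ((this _).2 dvd_rfl) ((this _).1 dvd_rfl)
  have hcw : ∀ j, Necklace.mk (cycleWord w j) = Necklace.mk (v (e j).1) := by
    intro j
    refine Quotient.sound (s := List.IsRotated.setoid α) ?_
    have : cycleWord w j = (v (e j).1).rotate (e j).2 := by
      rw [lab_mv v 0, cycleWord, hper]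
      apply List.map_congr_left
      intro t _
      rw [he, hiter]
    rw [this]
    exact List.IsRotated.symm ⟨_, rfl⟩
  have hF : (reps (tau w)).val.map (fun j => (e j).1) = (Finset.univ : Finset (Fin k)).val := by
    refine (Multiset.Nodup.ext ?_ Finset.univ.nodup).2 ?_
    · refine Multiset.Nodup.map_on ?_ (reps _).nodup
      intro a ha b hb hab
      obtain ⟨t, ht⟩ : ∃ t, mv v t (e a) = e b := by
        generalize e a = x at *
        generalize e b = y at *
        obtain ⟨i, s⟩ := x
        obtain ⟨j, t⟩ := y
        obtain rfl : i = j := hab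
        refine ⟨(v i).length - s + t, ?_⟩
        have : (s : ℕ) + ((v i).length - s + t) = t + (v i).length := by omega
        simp [mv, this, Nat.mod_eq_of_lt t.2]
      rw [← hiter, e.apply_eq_iff_eq] at ht
      exact reps_unique (tau_inj w) ha hb ht
    · intro i
      simp only [Multiset.mem_map, Finset.mem_val, Finset.mem_univ, iff_true]
      have hp : 0 < (v i).length := List.length_pos_iff.2 (hv i).1
      obtain ⟨t, ht⟩ := orbit_min (tau_inj w) (e.symm ⟨i, ⟨0, hp⟩⟩)
      refine ⟨_, (mem_reps (tau_inj w)).2 ht, ?_⟩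
      rw [hiter]
      simp [mv]
  rw [← hF, Multiset.map_map, Phi_eq]
  exact Multiset.map_congr rfl (fun j _ => hcw j)

theorem map_get {β γ : Type*} (L : List β) (g : β → γ) :
    (Finset.univ : Finset (Fin L.length)).val.map (fun i => g (L.get i)) =
      ((L.map g : List γ) : Multiset γ) := by
  show (((List.finRange L.length).map (fun i => g (L.get i)) : List γ) : Multiset γ) = _
  congr 1
  apply List.ext_getElem <;> simp

theorem part3 (M : Multiset (Necklace α)) (hM : ∀ x ∈ M, x.IsPrimitive) :
    ∃ w : List α, w.length = (M.map Necklace.length).sum ∧ Phi w = M := by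
  have hL : ∃ L : List (List α), (∀ u ∈ L, IsPrimitiveWord u) ∧
      (L.map Necklace.mk : Multiset (Necklace α)) = M := by
    induction M using Multiset.induction with
    | empty => exact ⟨[], by simp, rfl⟩
    | cons x M ih =>
      obtain ⟨L, h1, h2⟩ := ih (fun y hy => hM y (Multiset.mem_cons_of_mem hy))
      obtain ⟨u, hu, hp⟩ := hM x (Multiset.mem_cons_self x M)
      refine ⟨u :: L, ?_, ?_⟩
      · intro y hy
        rcases List.mem_cons.1 hy with rfl | hy
        · exact hp
        · exact h1 y hy
      · rw [List.map_cons, hu, ← h2]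
        rfl
  obtain ⟨L, h1, rfl⟩ := hL
  obtain ⟨w, hw, hPhi⟩ := surj_words (fun i => L.get i) (fun i => h1 _ (L.get_mem i)) rfl
  refine ⟨w, ?_, ?_⟩
  · rw [hw, Finset.sum, map_get L List.length, Multiset.map_coe, List.map_map]
    rfl
  · rw [hPhi, map_get L Necklace.mk]

end Surj

end GR

theorem stmt12 (α : Type*) [LinearOrder α] (n : ℕ) :
    (∀ w : List α, w.length = n →
        ((Phi w).map Necklace.length).sum = n ∧ ∀ x ∈ Phi w, x.IsPrimitive) ∧
    (∀ w w' : List α, w.length = n → w'.length = n → Phi w = Phi w' → w = w') ∧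
    (∀ M : Multiset (Necklace α), (M.map Necklace.length).sum = n →
        (∀ x ∈ M, x.IsPrimitive) → ∃ w : List α, w.length = n ∧ Phi w = M) := by
  refine ⟨?_, ?_, ?_⟩
  · rintro w rfl
    exact GR.part1 w
  · intro w w' h h' hP
    exact GR.part2 w w' (h.trans h'.symm) hP
  · rintro M rfl hM
    exact GR.part3 M hM
end
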